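/- For the GFPGM iterates, for every N ≥ 1, min_{0 ≤ i ≤ N} ‖∇̃F(x_i)‖ ≤ min( min_{0 ≤ i ≤ N−1} ‖∇̃F(y_i)‖, ‖∇̃F(x_N)‖ ) ≤ L R / √( Σ_{k=0}^{N−1} (T_k − t_k²) + T_{N−1} ). -/

import Mathlib

open scoped RealInnerProductSpace

/-!
Write `F = f + φ`. Cocoercivity of `f'` makes the gradient step `u ↦ u - f' u / L` nonexpansive, and
the proximal map of `φ / L` is nonexpansive too, so `p` is nonexpansive. With `x (i + 1) = p (y i)`
this gives `‖x (i + 1) - p (x (i + 1))‖ ≤ ‖y i - p (y i)‖`, hence the first inequality.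

For the second, put `z i = x i + (T i / t i) • (y i - x i)`; the recursion for `y` says exactly that
`z (i + 1) = z i - t i • (y i - x (i + 1))`. The descent inequality of a proximal gradient step,
taken at the comparison points `x i` and `xs` with weights `T i - t i` and `t i`, shows that
`(T n - t n) * (F (x n) - F xs)`
`+ L / 2 * (∑ k < n, (T k - t k ^ 2) * ‖y k - x (k + 1)‖ ^ 2 + ‖z n - xs‖ ^ 2)`
is nonincreasing in `n`, while one more step from `x N` shows that `F (x N) - F xs` is at least
`L / 2 * ‖x N - p (x N)‖ ^ 2`.
-/

section NormedSpace

variable {E : Type*} [NormedAddCommGroup E] [NormedSpace ℝ E]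

lemma add_fderiv_sub_le_of_convexOn {s : Set E} {f : E → ℝ} {f' : E →L[ℝ] ℝ} {u v : E}
    (hf : ConvexOn ℝ s f) (hu : u ∈ s) (hv : v ∈ s) (hf' : HasFDerivAt f f' u) :
    f u + f' (v - u) ≤ f v := by
  have hline : ConvexOn ℝ (AffineMap.lineMap u v ⁻¹' s) (f ∘ AffineMap.lineMap (k := ℝ) u v) :=
    hf.comp_affineMap (AffineMap.lineMap u v)
  have hderiv : HasDerivAt (f ∘ AffineMap.lineMap (k := ℝ) u v) (f' (v - u)) 0 :=
    HasFDerivAt.comp_hasDerivAt (0 : ℝ) (by simpa using hf') AffineMap.hasDerivAt_lineMap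
  have hslope := hline.le_slope_of_hasDerivAt (by simpa using hu) (by simpa using hv) one_pos hderiv
  simp only [slope_def_field, Function.comp_apply, AffineMap.lineMap_apply_one,
    AffineMap.lineMap_apply_zero, sub_zero, div_one] at hslope
  linarith

lemma le_add_fderiv_sub_add_sq {L : ℝ} {f : E → ℝ} {f' : E → E →L[ℝ] ℝ} {u v : E}
    (hf' : ∀ w ∈ segment ℝ u v, HasFDerivAt f (f' w) w)
    (hLip : ∀ w ∈ segment ℝ u v, ‖f' w - f' u‖ ≤ L * ‖w - u‖) :
    f v ≤ f u + f' u (v - u) + L / 2 * ‖v - u‖ ^ 2 := by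
  let c : ℝ → E := AffineMap.lineMap u v
  have hc {r : ℝ} (hr : r ∈ Set.Icc (0 : ℝ) 1) : c r ∈ segment ℝ u v := by
    rw [segment_eq_image_lineMap]
    exact Set.mem_image_of_mem _ hr
  have hderiv {r : ℝ} (hr : r ∈ Set.Icc (0 : ℝ) 1) :
      HasDerivAt (f ∘ c) (f' (c r) (v - u)) r :=
    (hf' _ (hc hr)).comp_hasDerivAt r AffineMap.hasDerivAt_lineMap
  let B : ℝ → ℝ := fun r => f u + f' u (v - u) * r + L / 2 * ‖v - u‖ ^ 2 * r ^ 2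
  have hBderiv (r : ℝ) : HasDerivAt B (f' u (v - u) + L * ‖v - u‖ ^ 2 * r) r := by
    have h := (((hasDerivAt_id r).const_mul (f' u (v - u))).const_add (f u)).add
      (((hasDerivAt_id r).pow 2).const_mul (L / 2 * ‖v - u‖ ^ 2))
    refine h.congr_deriv ?_
    simp only [id, Nat.cast_ofNat]
    ring
  have hslope {r : ℝ} (hr : r ∈ Set.Icc (0 : ℝ) 1) :
      f' (c r) (v - u) ≤ f' u (v - u) + L * ‖v - u‖ ^ 2 * r := by
    have hdist : ‖c r - u‖ = r * ‖v - u‖ := by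
      simp [c, AffineMap.lineMap_apply, norm_smul, abs_of_nonneg hr.1]
    rw [← sub_le_iff_le_add', ← sub_apply]
    calc (f' (c r) - f' u) (v - u) ≤ ‖f' (c r) - f' u‖ * ‖v - u‖ :=
          (Real.le_norm_self _).trans (ContinuousLinearMap.le_opNorm _ _)
      _ ≤ L * (r * ‖v - u‖) * ‖v - u‖ := by
          rw [← hdist]
          exact mul_le_mul_of_nonneg_right (hLip _ (hc hr)) (norm_nonneg _)
      _ = L * ‖v - u‖ ^ 2 * r := by ring
  have hle := image_le_of_deriv_right_le_deriv_boundary (a := 0) (b := 1) (f := f ∘ c) (B := B)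
    (fun r hr => (hderiv hr).continuousAt.continuousWithinAt)
    (fun r hr => (hderiv (Set.Ico_subset_Icc_self hr)).hasDerivWithinAt)
    (by simp [B, c])
    (fun r _ => (hBderiv r).continuousAt.continuousWithinAt)
    (fun r _ => (hBderiv r).hasDerivWithinAt)
    (fun r hr => hslope (Set.Ico_subset_Icc_self hr))
    (Set.right_mem_Icc.2 zero_le_one)
  simpa [B, c] using hle

lemma le_add_fderiv_sub_of_isMinOn_add {s : Set E} {h φ : E → ℝ} {h' : E →L[ℝ] ℝ} {x z : E}
    (hφ : ConvexOn ℝ s φ) (hmin : IsMinOn (h + φ) s x) (hx : x ∈ s) (hz : z ∈ s)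
    (hh' : HasFDerivAt h h' x) : φ x ≤ φ z + h' (z - x) := by
  let c : ℝ → E := AffineMap.lineMap x z
  -- On the segment from `x` to `z`, replace `φ` by its chord: the minimum stays at `x`, and the
  -- result is differentiable there.
  let q : ℝ → ℝ := fun r => h (c r) + AffineMap.lineMap (φ x) (φ z) r
  have hq : HasDerivAt q (h' (z - x) + (φ z - φ x)) 0 :=
    (HasFDerivAt.comp_hasDerivAt (0 : ℝ) (by simpa [c] using hh')
      AffineMap.hasDerivAt_lineMap).add AffineMap.hasDerivAt_lineMap
  have hqmin : IsMinOn q (Set.Icc 0 1) 0 := by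
    refine isMinOn_iff.2 fun r hr => ?_
    have hchord : φ (c r) ≤ AffineMap.lineMap (φ x) (φ z) r := by
      simpa only [c, AffineMap.lineMap_apply_module] using
        hφ.2 hx hz (sub_nonneg.2 hr.2) hr.1 (sub_add_cancel 1 r)
    have hle : h x + φ x ≤ h (c r) + φ (c r) :=
      isMinOn_iff.1 hmin _ (hφ.1.lineMap_mem hx hz hr)
    simpa [q, c] using hle.trans (add_le_add_right hchord _)
  have hnonneg := hqmin.localize.hasFDerivWithinAt_nonneg hq.hasFDerivAt.hasFDerivWithinAt
    (mem_posTangentConeAt_of_segment_subset (y := 1) (by simp [segment_eq_Icc]))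
  simp only [ContinuousLinearMap.toSpanSingleton_apply, one_smul] at hnonneg
  linarith

end NormedSpace

section InnerProductSpace

variable {E : Type*} [NormedAddCommGroup E] [InnerProductSpace ℝ E]
  {L : ℝ} {f φ : E → ℝ} {f' : E → E}

lemma le_add_inner_gradient_add_sq (hgrad : ∀ z, HasFDerivAt f (innerSL ℝ (f' z)) z)
    (hLip : ∀ u v, ‖f' u - f' v‖ ≤ L * ‖u - v‖) (u v : E) :
    f v ≤ f u + ⟪f' u, v - u⟫ + L / 2 * ‖v - u‖ ^ 2 :=
  le_add_fderiv_sub_add_sq (f' := fun w => innerSL ℝ (f' w)) (fun w _ => hgrad w) fun w _ => by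
    rw [← map_sub, innerSL_apply_norm]
    exact hLip w u

lemma norm_gradient_sub_sq_le (hL : 0 < L) (hf : ConvexOn ℝ Set.univ f)
    (hgrad : ∀ z, HasFDerivAt f (innerSL ℝ (f' z)) z)
    (hLip : ∀ u v, ‖f' u - f' v‖ ≤ L * ‖u - v‖) (u v : E) :
    ‖f' u - f' v‖ ^ 2 ≤ 2 * L * (f v - f u - ⟪f' u, v - u⟫) := by
  -- `w` minimizes the quadratic upper bound of `f` at `v` minus the affine lower bound at `u`.
  let d := f' u - f' v
  let w := v + L⁻¹ • d
  have hlower : f u + ⟪f' u, w - u⟫ ≤ f w :=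
    add_fderiv_sub_le_of_convexOn hf (Set.mem_univ u) (Set.mem_univ w) (hgrad u)
  have hupper := le_add_inner_gradient_add_sq hgrad hLip v w
  have hinner : ⟪f' u, w - u⟫ = ⟪f' u, v - u⟫ + L⁻¹ * ⟪f' u, d⟫ := by
    rw [add_sub_right_comm, inner_add_right, inner_smul_right]
  have hsq : ⟪f' u, d⟫ - ⟪f' v, d⟫ = ‖d‖ ^ 2 := by
    rw [← inner_sub_left, real_inner_self_eq_norm_sq]
  rw [add_sub_cancel_left, inner_smul_right, norm_smul, Real.norm_of_nonneg (inv_pos.2 hL).le]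
    at hupper
  have hquad : L / 2 * (L⁻¹ * ‖d‖) ^ 2 = L⁻¹ * ‖d‖ ^ 2 / 2 := by field_simp
  have hdiv : L⁻¹ * ‖d‖ ^ 2 ≤ 2 * (f v - f u - ⟪f' u, v - u⟫) := by
    rw [← hsq] at hquad ⊢
    linarith
  rw [inv_mul_le_iff₀ hL] at hdiv
  linarith

/-- The Baillon–Haddad theorem. -/
lemma norm_gradient_sub_sq_le_inner (hL : 0 < L) (hf : ConvexOn ℝ Set.univ f)
    (hgrad : ∀ z, HasFDerivAt f (innerSL ℝ (f' z)) z)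
    (hLip : ∀ u v, ‖f' u - f' v‖ ≤ L * ‖u - v‖) (u v : E) :
    ‖f' u - f' v‖ ^ 2 ≤ L * ⟪f' u - f' v, u - v⟫ := by
  have huv := norm_gradient_sub_sq_le hL hf hgrad hLip u v
  have hvu := norm_gradient_sub_sq_le hL hf hgrad hLip v u
  have hinner : ⟪f' u - f' v, u - v⟫ = -⟪f' u, v - u⟫ - ⟪f' v, u - v⟫ := by
    rw [← inner_neg_right, neg_sub, inner_sub_left]
  rw [norm_sub_rev] at hvu
  rw [hinner]
  linarith

lemma norm_smul_sub_le_of_norm_sq_le_inner (hL : 0 ≤ L) {a d : E}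
    (h : ‖d‖ ^ 2 ≤ L * ⟪d, a⟫) : ‖L • a - d‖ ≤ L * ‖a‖ := by
  refine le_of_sq_le_sq ?_ (by positivity)
  rw [norm_sub_sq_real, norm_smul, Real.norm_of_nonneg hL, real_inner_smul_left, real_inner_comm]
  linarith [sq_nonneg ‖d‖]

/-- `x` is the result of a proximal gradient step with step size `1 / L` from `y` for the composite
objective `f + φ`, where `f'` is the gradient of `f`. Minimizers of the model need not exist a
priori, so the step is encoded as a relation between `y` and `x`. -/
def IsProxGradStep (L : ℝ) (f : E → ℝ) (f' : E → E) (φ : E → ℝ) (y x : E) : Prop :=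
  IsMinOn (fun z => f y + ⟪f' y, z - y⟫ + L / 2 * ‖z - y‖ ^ 2 + φ z) Set.univ x

namespace IsProxGradStep

variable {x y x' y' : E}

lemma le_add_inner (hφ : ConvexOn ℝ Set.univ φ) (hx : IsProxGradStep L f f' φ y x) (z : E) :
    φ x ≤ φ z + ⟪f' y + L • (x - y), z - x⟫ := by
  have hmodel : HasFDerivAt (fun z => f y + ⟪f' y, z - y⟫ + L / 2 * ‖z - y‖ ^ 2)
      (innerSL ℝ (f' y + L • (x - y))) x := by
    have hsub : HasFDerivAt (fun z => z - y) (ContinuousLinearMap.id ℝ E) x :=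
      (hasFDerivAt_id x).sub_const y
    refine ((((innerSL ℝ (f' y)).hasFDerivAt.comp x hsub).const_add (f y)).add
      (hsub.norm_sq.const_mul (L / 2))).congr_fderiv ?_
    ext z
    simp only [ContinuousLinearMap.comp_id, map_sub, add_apply, coe_innerSL_apply, smul_apply,
      sub_apply, nsmul_eq_mul, Nat.cast_ofNat, smul_eq_mul, map_add, map_smul]
    ring
  exact le_add_fderiv_sub_of_isMinOn_add hφ hx (Set.mem_univ x) (Set.mem_univ z) hmodel

lemma mul_norm_sub_sq_le_inner (hφ : ConvexOn ℝ Set.univ φ) (hx : IsProxGradStep L f f' φ y x)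
    (hx' : IsProxGradStep L f f' φ y' x') :
    L * ‖x - x'‖ ^ 2 ≤ ⟪L • (y - y') - (f' y - f' y'), x - x'⟫ := by
  have hmono : ⟪f' y + L • (x - y), x' - x⟫ + ⟪f' y' + L • (x' - y'), x - x'⟫
      = ⟪L • (y - y') - (f' y - f' y'), x - x'⟫ - L * ‖x - x'‖ ^ 2 := by
    rw [← neg_sub x x', inner_neg_right, ← real_inner_self_eq_norm_sq, ← real_inner_smul_left,
      neg_add_eq_sub, ← inner_sub_left, ← inner_sub_left]
    congr 1
    module
  linarith [hx.le_add_inner hφ x', hx'.le_add_inner hφ x]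

lemma norm_sub_le (hL : 0 < L) (hf : ConvexOn ℝ Set.univ f)
    (hgrad : ∀ z, HasFDerivAt f (innerSL ℝ (f' z)) z)
    (hLip : ∀ u v, ‖f' u - f' v‖ ≤ L * ‖u - v‖) (hφ : ConvexOn ℝ Set.univ φ)
    (hx : IsProxGradStep L f f' φ y x) (hx' : IsProxGradStep L f f' φ y' x') :
    ‖x - x'‖ ≤ ‖y - y'‖ := by
  rcases (norm_nonneg (x - x')).eq_or_lt with h0 | hpos
  · exact h0 ▸ norm_nonneg _
  refine le_of_mul_le_mul_left ?_ (mul_pos hL hpos)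
  calc L * ‖x - x'‖ * ‖x - x'‖ = L * ‖x - x'‖ ^ 2 := by ring
    _ ≤ ⟪L • (y - y') - (f' y - f' y'), x - x'⟫ := hx.mul_norm_sub_sq_le_inner hφ hx'
    _ ≤ ‖L • (y - y') - (f' y - f' y')‖ * ‖x - x'‖ := real_inner_le_norm _ _
    _ ≤ L * ‖y - y'‖ * ‖x - x'‖ := by
        gcongr
        exact norm_smul_sub_le_of_norm_sq_le_inner hL.le
          (norm_gradient_sub_sq_le_inner hL hf hgrad hLip y y')
    _ = L * ‖x - x'‖ * ‖y - y'‖ := by ring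

lemma add_sq_add_inner_le (hf : ConvexOn ℝ Set.univ f)
    (hgrad : ∀ z, HasFDerivAt f (innerSL ℝ (f' z)) z)
    (hLip : ∀ u v, ‖f' u - f' v‖ ≤ L * ‖u - v‖) (hφ : ConvexOn ℝ Set.univ φ)
    (hx : IsProxGradStep L f f' φ y x) (z : E) :
    f x + φ x + L / 2 * ‖y - x‖ ^ 2 + L * ⟪z - y, y - x⟫ ≤ f z + φ z := by
  have hprox := hx.le_add_inner hφ z
  have hupper := le_add_inner_gradient_add_sq hgrad hLip y x
  have hlower : f y + ⟪f' y, z - y⟫ ≤ f z :=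
    add_fderiv_sub_le_of_convexOn hf (Set.mem_univ y) (Set.mem_univ z) (hgrad y)
  have hinner : ⟪f' y + L • (x - y), z - x⟫
      = ⟪f' y, z - y⟫ - ⟪f' y, x - y⟫ - L * ⟪z - y, y - x⟫ - L * ‖y - x‖ ^ 2 := by
    rw [← real_inner_self_eq_norm_sq, ← inner_sub_right, real_inner_comm (y - x),
      sub_sub_sub_cancel_right, ← real_inner_smul_left, ← real_inner_smul_left, sub_sub,
      ← inner_add_right, sub_add_sub_cancel, ← inner_sub_left]
    congr 1
    module
  rw [norm_sub_rev x y] at hupper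
  linarith

lemma add_sq_le (hf : ConvexOn ℝ Set.univ f)
    (hgrad : ∀ z, HasFDerivAt f (innerSL ℝ (f' z)) z)
    (hLip : ∀ u v, ‖f' u - f' v‖ ≤ L * ‖u - v‖) (hφ : ConvexOn ℝ Set.univ φ)
    (hx : IsProxGradStep L f f' φ y x) :
    f x + φ x + L / 2 * ‖y - x‖ ^ 2 ≤ f y + φ y := by
  simpa using hx.add_sq_add_inner_le hf hgrad hLip hφ y

end IsProxGradStep

/-- The weights of the GFPGM: `T` is the sequence of partial sums of the positive sequence `t`. -/
structure IsGFPGMWeights (t T : ℕ → ℝ) : Prop where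
  pos : ∀ i, 0 < t i
  eq_sum : ∀ i, T i = ∑ l ∈ Finset.range (i + 1), t l

namespace IsGFPGMWeights

variable {t T : ℕ → ℝ}

lemma zero (ht : IsGFPGMWeights t T) : T 0 = t 0 := by
  simp [ht.eq_sum]

lemma succ (ht : IsGFPGMWeights t T) (i : ℕ) : T (i + 1) = T i + t (i + 1) := by
  rw [ht.eq_sum, ht.eq_sum, Finset.sum_range_succ _ (i + 1)]

lemma sum_pos (ht : IsGFPGMWeights t T) (i : ℕ) : 0 < T i := by
  rw [ht.eq_sum]
  exact Finset.sum_pos (fun l _ => ht.pos l) Finset.nonempty_range_add_one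

lemma le_sum (ht : IsGFPGMWeights t T) (i : ℕ) : t i ≤ T i := by
  rw [ht.eq_sum]
  exact Finset.single_le_sum (fun l _ => (ht.pos l).le) (Finset.self_mem_range_succ i)

end IsGFPGMWeights

/-- The extrapolation rule of the GFPGM, relating the main iterates `x` and the extrapolated points
`y`. How `x (i + 1)` is computed from `y i` is left open: the potential argument uses the step only
through a descent inequality. -/
structure IsGFPGMExtrapolation (t T : ℕ → ℝ) (x y : ℕ → E) : Prop where
  zero : y 0 = x 0
  succ : ∀ i, y (i + 1) = x (i + 1)
    + ((T i - t i) * t (i + 1) / (t i * T (i + 1))) • (x (i + 1) - x i)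
    + ((t i ^ 2 - T i) * t (i + 1) / (t i * T (i + 1))) • (x (i + 1) - y i)

/-- The auxiliary sequence of the GFPGM, determined by `T i • y i = (T i - t i) • x i + t i • z i`;
its increments are `-t i • (y i - x (i + 1))`. -/
noncomputable def gfpgmAux (t T : ℕ → ℝ) (x y : ℕ → E) (i : ℕ) : E :=
  x i + (T i / t i) • (y i - x i)

/-- The Lyapunov function of the GFPGM for an objective `F` and a comparison point `xs`. The factor
`T n - t n` is the partial sum `T (n - 1)`, read as `0` when `n = 0`. -/
noncomputable def gfpgmPotential (L : ℝ) (F : E → ℝ) (xs : E) (t T : ℕ → ℝ) (x y : ℕ → E)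
    (n : ℕ) : ℝ :=
  (T n - t n) * (F (x n) - F xs)
    + L / 2 * (∑ k ∈ Finset.range n, (T k - t k ^ 2) * ‖y k - x (k + 1)‖ ^ 2
      + ‖gfpgmAux t T x y n - xs‖ ^ 2)

section Potential

variable {t T : ℕ → ℝ} {x y : ℕ → E} {F : E → ℝ} {xs : E}

lemma gfpgmAux_succ (ht : IsGFPGMWeights t T) (hxy : IsGFPGMExtrapolation t T x y) (i : ℕ) :
    gfpgmAux t T x y (i + 1) = gfpgmAux t T x y i - t i • (y i - x (i + 1)) := by
  have hti := (ht.pos i).ne'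
  have hti' := (ht.pos (i + 1)).ne'
  have hTi' := (ht.sum_pos (i + 1)).ne'
  have hx : T (i + 1) / t (i + 1) * ((T i - t i) * t (i + 1) / (t i * T (i + 1)))
      = T i / t i - 1 := by field_simp
  have hy : T (i + 1) / t (i + 1) * ((t i ^ 2 - T i) * t (i + 1) / (t i * T (i + 1)))
      = t i - T i / t i := by field_simp
  rw [gfpgmAux, gfpgmAux, hxy.succ, add_assoc, add_sub_cancel_left, smul_add, smul_smul, smul_smul,
    hx, hy]
  module

lemma smul_gfpgmAux_sub {i : ℕ} (hti : t i ≠ 0) :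
    t i • (gfpgmAux t T x y i - xs) = (T i - t i) • (y i - x i) + t i • (y i - xs) := by
  rw [gfpgmAux, add_sub_right_comm, smul_add, smul_smul, mul_div_cancel₀ _ hti]
  module

lemma norm_gfpgmAux_succ_sub_sq (ht : IsGFPGMWeights t T) (hxy : IsGFPGMExtrapolation t T x y)
    (i : ℕ) :
    ‖gfpgmAux t T x y (i + 1) - xs‖ ^ 2 = ‖gfpgmAux t T x y i - xs‖ ^ 2
      + 2 * ((T i - t i) * ⟪x i - y i, y i - x (i + 1)⟫ + t i * ⟪xs - y i, y i - x (i + 1)⟫)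
      + t i ^ 2 * ‖y i - x (i + 1)‖ ^ 2 := by
  have hinner : ⟪gfpgmAux t T x y i - xs, t i • (y i - x (i + 1))⟫
      = -((T i - t i) * ⟪x i - y i, y i - x (i + 1)⟫ + t i * ⟪xs - y i, y i - x (i + 1)⟫) := by
    rw [inner_smul_right, ← real_inner_smul_left, smul_gfpgmAux_sub (ht.pos i).ne', inner_add_left,
      real_inner_smul_left, real_inner_smul_left, ← neg_sub (x i), ← neg_sub xs, inner_neg_left,
      inner_neg_left]
    ring
  rw [gfpgmAux_succ ht hxy, sub_right_comm, norm_sub_sq_real, hinner, norm_smul,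
    Real.norm_of_nonneg (ht.pos i).le]
  ring

lemma gfpgmPotential_zero (ht : IsGFPGMWeights t T) (hxy : IsGFPGMExtrapolation t T x y) :
    gfpgmPotential L F xs t T x y 0 = L / 2 * ‖x 0 - xs‖ ^ 2 := by
  simp [gfpgmPotential, gfpgmAux, ht.zero, hxy.zero]

lemma antitone_gfpgmPotential (ht : IsGFPGMWeights t T) (hxy : IsGFPGMExtrapolation t T x y)
    (hstep : ∀ n z, F (x (n + 1)) + L / 2 * ‖y n - x (n + 1)‖ ^ 2
      + L * ⟪z - y n, y n - x (n + 1)⟫ ≤ F z) :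
    Antitone (gfpgmPotential L F xs t T x y) := by
  refine antitone_nat_of_succ_le fun n => ?_
  have hxn := mul_le_mul_of_nonneg_left (hstep n (x n)) (sub_nonneg.2 (ht.le_sum n))
  have hxs := mul_le_mul_of_nonneg_left (hstep n xs) (ht.pos n).le
  rw [gfpgmPotential, gfpgmPotential, norm_gfpgmAux_succ_sub_sq ht hxy, Finset.sum_range_succ,
    ht.succ, add_sub_cancel_right]
  linarith

lemma gfpgm_sum_residual_sq_le (hL : 0 < L) (ht : IsGFPGMWeights t T)
    (hxy : IsGFPGMExtrapolation t T x y)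
    (hstep : ∀ n z, F (x (n + 1)) + L / 2 * ‖y n - x (n + 1)‖ ^ 2
      + L * ⟪z - y n, y n - x (n + 1)⟫ ≤ F z)
    {n : ℕ} {r : ℝ} (hgap : F xs + L / 2 * r ≤ F (x (n + 1))) :
    ∑ k ∈ Finset.range (n + 1), (T k - t k ^ 2) * ‖y k - x (k + 1)‖ ^ 2 + T n * r
      ≤ ‖x 0 - xs‖ ^ 2 := by
  have hpot : gfpgmPotential L F xs t T x y (n + 1) ≤ gfpgmPotential L F xs t T x y 0 :=
    antitone_gfpgmPotential ht hxy hstep (Nat.zero_le _)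
  rw [gfpgmPotential_zero ht hxy, gfpgmPotential, ht.succ, add_sub_cancel_right] at hpot
  have hr := mul_le_mul_of_nonneg_left (le_sub_iff_add_le'.2 hgap) (ht.sum_pos n).le
  have hz : 0 ≤ L / 2 * ‖gfpgmAux t T x y (n + 1) - xs‖ ^ 2 := by positivity
  refine le_of_mul_le_mul_left ?_ (half_pos hL)
  linarith

end Potential

end InnerProductSpace

lemma inf'_range_succ_le_min {α : Type*} [LinearOrder α] {a b : ℕ → α} {N : ℕ}
    (hN : (Finset.range N).Nonempty) (hab : ∀ i < N, a (i + 1) ≤ b i) :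
    (Finset.range (N + 1)).inf' Finset.nonempty_range_add_one a
      ≤ min ((Finset.range N).inf' hN b) (a N) := by
  refine le_min (Finset.le_inf' _ _ fun i hi => ?_)
    (Finset.inf'_le _ (Finset.self_mem_range_succ N))
  have hiN := Finset.mem_range.1 hi
  exact (Finset.inf'_le _ (Finset.mem_range.2 (Nat.succ_lt_succ hiN))).trans (hab i hiN)

lemma min_inf'_le_div_sqrt {ι : Type*} {s : Finset ι} (hs : s.Nonempty) {w a : ι → ℝ} {b c R : ℝ}
    (hw : ∀ i ∈ s, 0 ≤ w i) (hb : 0 < b) (ha : ∀ i ∈ s, 0 ≤ a i) (hc : 0 ≤ c) (hR : 0 ≤ R)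
    (h : ∑ i ∈ s, w i * a i ^ 2 + b * c ^ 2 ≤ R ^ 2) :
    min (s.inf' hs a) c ≤ R / √(∑ i ∈ s, w i + b) := by
  set m := min (s.inf' hs a) c
  have hm : 0 ≤ m := le_min (Finset.le_inf' _ _ ha) hc
  have hW : 0 < ∑ i ∈ s, w i + b := add_pos_of_nonneg_of_pos (Finset.sum_nonneg hw) hb
  rw [le_div_iff₀ (Real.sqrt_pos.2 hW)]
  refine le_of_sq_le_sq ?_ hR
  calc (m * √(∑ i ∈ s, w i + b)) ^ 2 = ∑ i ∈ s, w i * m ^ 2 + b * m ^ 2 := by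
        rw [mul_pow, Real.sq_sqrt hW.le, mul_comm, add_mul, Finset.sum_mul]
    _ ≤ ∑ i ∈ s, w i * a i ^ 2 + b * c ^ 2 := by
        gcongr with i hi
        · exact hw i hi
        · exact (min_le_left _ _).trans (Finset.inf'_le _ hi)
        · exact min_le_right _ _
    _ ≤ R ^ 2 := h

lemma min_inf'_mul_le_div_sqrt {ι : Type*} {s : Finset ι} (hs : s.Nonempty) {w a : ι → ℝ}
    {b c L R : ℝ} (hL : 0 ≤ L) (hw : ∀ i ∈ s, 0 ≤ w i) (hb : 0 < b) (ha : ∀ i ∈ s, 0 ≤ a i)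
    (hc : 0 ≤ c) (hR : 0 ≤ R) (h : ∑ i ∈ s, w i * a i ^ 2 + b * c ^ 2 ≤ R ^ 2) :
    min (s.inf' hs fun i => L * a i) (L * c) ≤ L * R / √(∑ i ∈ s, w i + b) := by
  refine min_inf'_le_div_sqrt hs hw hb (fun i hi => mul_nonneg hL (ha i hi)) (mul_nonneg hL hc)
    (mul_nonneg hL hR) ?_
  calc ∑ i ∈ s, w i * (L * a i) ^ 2 + b * (L * c) ^ 2
      = L ^ 2 * (∑ i ∈ s, w i * a i ^ 2 + b * c ^ 2) := by
        simp only [mul_pow, mul_add, Finset.mul_sum, mul_left_comm]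
    _ ≤ L ^ 2 * R ^ 2 := mul_le_mul_of_nonneg_left h (sq_nonneg L)
    _ = (L * R) ^ 2 := (mul_pow L R 2).symm

theorem gfpgm_cgm_bound_general
    {E : Type*} [NormedAddCommGroup E] [InnerProductSpace ℝ E]
    (L : ℝ) (hL : 0 < L)
    (f : E → ℝ) (f' : E → E) (φ : E → ℝ)
    (hf : ConvexOn ℝ Set.univ f)
    (hgrad : ∀ z : E, HasFDerivAt f (innerSL ℝ (f' z)) z)
    (hLip : ∀ u v : E, ‖f' u - f' v‖ ≤ L * ‖u - v‖)
    (hφ : ConvexOn ℝ Set.univ φ)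
    (p : E → E)
    (hp : ∀ y : E, IsMinOn
      (fun z => f y + ⟪f' y, z - y⟫ + L / 2 * ‖z - y‖ ^ 2 + φ z) Set.univ (p y))
    (xs : E) (R : ℝ)
    (t T : ℕ → ℝ) (htpos : ∀ i, 0 < t i)
    (hT : ∀ i, T i = ∑ l ∈ Finset.range (i + 1), t l)
    (htT : ∀ i, t i ^ 2 ≤ T i)
    (x y : ℕ → E)
    (hy0 : y 0 = x 0)
    (hx : ∀ i, x (i + 1) = p (y i))
    (hy : ∀ i, y (i + 1) = x (i + 1)
        + ((T i - t i) * t (i + 1) / (t i * T (i + 1))) • (x (i + 1) - x i)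
        + ((t i ^ 2 - T i) * t (i + 1) / (t i * T (i + 1))) • (x (i + 1) - y i))
    (hR : ‖x 0 - xs‖ ≤ R)
    (N : ℕ) (hN : 1 ≤ N)
    (hxs : f xs + φ xs ≤ f (p (x N)) + φ (p (x N))) :
    (Finset.range (N + 1)).inf' (Finset.nonempty_range_iff.mpr (Nat.succ_ne_zero N))
        (fun i => L * ‖x i - p (x i)‖)
      ≤ min ((Finset.range N).inf' (Finset.nonempty_range_iff.mpr (Nat.ne_of_gt hN))
          (fun i => L * ‖y i - p (y i)‖)) (L * ‖x N - p (x N)‖) ∧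
    min ((Finset.range N).inf' (Finset.nonempty_range_iff.mpr (Nat.ne_of_gt hN))
          (fun i => L * ‖y i - p (y i)‖)) (L * ‖x N - p (x N)‖)
      ≤ L * R / Real.sqrt (∑ k ∈ Finset.range N, (T k - t k ^ 2) + T (N - 1)) := by
  obtain ⟨n, rfl⟩ := Nat.exists_eq_add_of_le' hN
  have ht : IsGFPGMWeights t T := ⟨htpos, hT⟩
  have hprox (u : E) : IsProxGradStep L f f' φ u (p u) := hp u
  refine ⟨inf'_range_succ_le_min _ fun i _ => ?_, min_inf'_mul_le_div_sqrt _ hL.le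
    (fun k _ => sub_nonneg.2 (htT k)) (ht.sum_pos n) (fun _ _ => norm_nonneg _) (norm_nonneg _)
    ((norm_nonneg _).trans hR) ?_⟩
  · rw [hx i]
    exact mul_le_mul_of_nonneg_left
      ((hprox (y i)).norm_sub_le hL hf hgrad hLip hφ (hprox (p (y i)))) hL.le
  · have hgap := (hprox (x (n + 1))).add_sq_le hf hgrad hLip hφ
    have hsum := gfpgm_sum_residual_sq_le (F := f + φ) hL ht ⟨hy0, hy⟩
      (fun i z => by rw [hx i]; exact (hprox (y i)).add_sq_add_inner_le hf hgrad hLip hφ z)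
      ((add_le_add_left hxs _).trans hgap)
    simpa only [hx, Nat.add_sub_cancel] using hsum.trans (pow_le_pow_left₀ (norm_nonneg _) hR 2)

/-- for the GFPGM iterates, for every N ≥ 1,
min_{0≤i≤N} ‖∇̃F(x_i)‖ ≤ min( min_{0≤i≤N−1} ‖∇̃F(y_i)‖, ‖∇̃F(x_N)‖ )
≤ LR/√( Σ_{k=0}^{N−1}(T_k − t_k²) + T_{N−1} ). -/
theorem gfpgm_cgm_bound
    {E : Type*} [NormedAddCommGroup E] [InnerProductSpace ℝ E]
    (L : ℝ) (hL : 0 < L)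
    (f : E → ℝ) (f' : E → E) (φ : E → ℝ)
    (hf : ConvexOn ℝ Set.univ f)
    (hgrad : ∀ z : E, HasFDerivAt f (innerSL ℝ (f' z)) z)
    (hLip : ∀ u v : E, ‖f' u - f' v‖ ≤ L * ‖u - v‖)
    (hφ : ConvexOn ℝ Set.univ φ)
    (p : E → E)
    (hp : ∀ y : E, IsMinOn
      (fun z => f y + ⟪f' y, z - y⟫ + L / 2 * ‖z - y‖ ^ 2 + φ z) Set.univ (p y))
    (xs : E) (hxs : IsMinOn (fun z => f z + φ z) Set.univ xs)
    (R : ℝ) (hR0 : 0 ≤ R)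
    (t T : ℕ → ℝ) (ht0 : t 0 = 1) (htpos : ∀ i, 0 < t i)
    (hT : ∀ i, T i = ∑ l ∈ Finset.range (i + 1), t l)
    (htT : ∀ i, t i ^ 2 ≤ T i)
    (x y : ℕ → E)
    (hy0 : y 0 = x 0)
    (hx : ∀ i, x (i + 1) = p (y i))
    (hy : ∀ i, y (i + 1) = x (i + 1)
        + ((T i - t i) * t (i + 1) / (t i * T (i + 1))) • (x (i + 1) - x i)
        + ((t i ^ 2 - T i) * t (i + 1) / (t i * T (i + 1))) • (x (i + 1) - y i))
    (hR : ‖x 0 - xs‖ ≤ R)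
    (N : ℕ) (hN : 1 ≤ N) :
    (Finset.range (N + 1)).inf' (Finset.nonempty_range_iff.mpr (Nat.succ_ne_zero N))
        (fun i => L * ‖x i - p (x i)‖)
      ≤ min ((Finset.range N).inf' (Finset.nonempty_range_iff.mpr (by omega))
          (fun i => L * ‖y i - p (y i)‖)) (L * ‖x N - p (x N)‖) ∧
    min ((Finset.range N).inf' (Finset.nonempty_range_iff.mpr (by omega))
          (fun i => L * ‖y i - p (y i)‖)) (L * ‖x N - p (x N)‖)
      ≤ L * R / Real.sqrt (∑ k ∈ Finset.range N, (T k - t k ^ 2) + T (N - 1)) :=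
  gfpgm_cgm_bound_general L hL f f' φ hf hgrad hLip hφ p hp xs R t T htpos hT htT x y hy0 hx hy hR
    N hN (isMinOn_iff.1 hxs _ (Set.mem_univ _))
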